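/- Let (a_k)_{k=0}^∞ be a nonnegative sequence with a_k > 0 for 0 ≤ k ≤ 4 and a_k = 0 for all k ≥ 5. Then (a_k) is a TP_∞-preserver if and only if the three polynomials ∑_{k=0}^4 a_k x^k, ∑_{k=1}^4 a_k x^k and ∑_{k=2}^4 a_k x^k all have only real (necessarily nonpositive) zeros. Moreover, (a_k) maps every TP_∞ sequence to a TP_∞ sequence if and only if it maps every 4-times positive sequence to a TP_∞ sequence. -/

import Mathlib

/-- A real sequence `(a_k)` is totally positive (TP_∞) if all finite minors of the
infinite Toeplitz matrix `(a_{j-i})` (with `a_k = 0` for `k < 0`) are nonnegative. -/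
def IsTotallyPositive (a : ℕ → ℝ) : Prop :=
  ∀ (n : ℕ) (i j : Fin n → ℕ), StrictMono i → StrictMono j →
    0 ≤ (Matrix.of fun p q : Fin n => if i p ≤ j q then a (j q - i p) else 0).det

/-- A real sequence is `m`-times positive (TP_m) if all such minors of order at most `m`
are nonnegative. -/
def IsMultiplyPositive (m : ℕ) (a : ℕ → ℝ) : Prop :=
  ∀ (n : ℕ), n ≤ m → ∀ (i j : Fin n → ℕ), StrictMono i → StrictMono j →
    0 ≤ (Matrix.of fun p q : Fin n => if i p ≤ j q then a (j q - i p) else 0).det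

/-- A nonnegative sequence `(a_k)` is a TP_∞-preserver if for every totally positive
sequence `(b_k)`, the sequence `(a_k b_k)` is totally positive. -/
def IsTPPreserver (a : ℕ → ℝ) : Prop :=
  ∀ b : ℕ → ℝ, IsTotallyPositive b → IsTotallyPositive (fun k => a k * b k)

/-!
A finitely supported totally positive sequence generates a real-rooted polynomial `p`. Otherwise
take a root `z` in the upper half plane: for suitable `φ` and `K`, the vector of the numbers
`Im (exp (i φ) z ^ j)`, `j ≤ K + deg p`, has fewer than `K` sign changes and is annihilated by the
first `K + 1` rows of the Toeplitz matrix of `p`. Perturbed by a small multiple of `t ^ j`, `t < 0`,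
it gets an image with exactly `K` sign changes, although totally nonnegative matrices do not
increase their number. Applying a preserver `a` to the indicators of `{k | s ≤ k}` thus shows that
the three tails of `∑ a_k x^k` are real-rooted.

Conversely, let the tails be real-rooted, let `-y` be the largest root of `∑ a_{k+1} t^k`, and let
`0 < x ≤ y / 2` be such that `∑ a_k t^k` is nonpositive at `-x`. Then `∑ a_k b_k t^k` is nonpositive
at `-x b_0 / b_1`, nonnegative at `-y b_1 / b_2` and nonpositive at `-a_3 b_3 / (2 a_4 b_4)`, which
uses only the minors of `b` of order at most three. The sign pattern forces the quartic to be
real-rooted, so it is a product of linear factors with nonnegative coefficients, and multiplication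
by such a factor preserves total positivity.
-/

open Polynomial

/-! ### Totally nonnegative matrices -/

/-- A real matrix is totally nonnegative if all its finite minors, with rows and columns taken in
increasing order, are nonnegative. -/
def TotallyNonneg {m n : Type*} [Preorder m] [Preorder n] (A : Matrix m n ℝ) : Prop :=
  ∀ (k : ℕ) (i : Fin k → m) (j : Fin k → n), StrictMono i → StrictMono j →
    0 ≤ (A.submatrix i j).det

/-- The infinite Toeplitz matrix `(a_{j-i})`, where `a_k = 0` for `k < 0`. -/
def toeplitz (a : ℕ → ℝ) : Matrix ℕ ℕ ℝ :=
  Matrix.of fun i j => if i ≤ j then a (j - i) else 0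

theorem isTotallyPositive_iff {a : ℕ → ℝ} : IsTotallyPositive a ↔ TotallyNonneg (toeplitz a) :=
  Iff.rfl

namespace TotallyNonneg

variable {m n : Type*}

theorem submatrix [Preorder m] [Preorder n] {A : Matrix m n ℝ} (hA : TotallyNonneg A)
    {m' n' : Type*} [Preorder m'] [Preorder n'] {f : m' → m} {g : n' → n} (hf : StrictMono f)
    (hg : StrictMono g) : TotallyNonneg (A.submatrix f g) :=
  fun k i j hi hj => hA k (f ∘ i) (g ∘ j) (hf.comp hi) (hg.comp hj)

theorem transpose [Preorder m] [Preorder n] {A : Matrix m n ℝ} (hA : TotallyNonneg A) :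
    TotallyNonneg A.transpose := fun k i j hi hj => by
  rw [← Matrix.det_transpose]
  exact hA k j i hj hi

theorem det_submatrix_nonneg_of_monotone [PartialOrder m] [Preorder n] {A : Matrix m n ℝ}
    (hA : TotallyNonneg A) {k : ℕ} {i : Fin k → m} {j : Fin k → n} (hi : Monotone i)
    (hj : StrictMono j) : 0 ≤ (A.submatrix i j).det := by
  by_cases hinj : i.Injective
  · exact hA k i j (hi.strictMono_of_injective hinj) hj
  · obtain ⟨p, q, hpq, hne⟩ := Function.not_injective_iff.mp hinj
    refine (Matrix.det_zero_of_row_eq hne ?_).ge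
    ext s
    rw [Matrix.submatrix_apply, Matrix.submatrix_apply, hpq]

theorem det_sum_rows_nonneg [PartialOrder m] [Preorder n] {A : Matrix m n ℝ}
    (hA : TotallyNonneg A) {k : ℕ} {ι : Type*} [Fintype ι] {w : Fin k → ι → ℝ}
    (hw : ∀ p t, 0 ≤ w p t) {f : Fin k → ι → m}
    (hf : ∀ r : Fin k → ι, (∀ p, w p (r p) ≠ 0) → Monotone fun p => f p (r p))
    {j : Fin k → n} (hj : StrictMono j) :
    0 ≤ (Matrix.of fun p q => ∑ t, w p t * A (f p t) (j q)).det := by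
  classical
  let D := (Matrix.detRowAlternating (R := ℝ) (n := Fin k)).toMultilinearMap
  have expand : (Matrix.of fun p q => ∑ t, w p t * A (f p t) (j q)).det =
      ∑ r : Fin k → ι, (∏ p, w p (r p)) * (A.submatrix (fun p => f p (r p)) j).det := by
    calc
      _ = D fun p => ∑ t, w p t • fun q => A (f p t) (j q) := by
        refine congrArg Matrix.det (Matrix.ext fun p q => ?_)
        simp only [Matrix.of_apply, Finset.sum_apply, Pi.smul_apply, smul_eq_mul]
      _ = ∑ r : Fin k → ι, D fun p => w p (r p) • fun q => A (f p (r p)) (j q) := D.map_sum _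
      _ = _ := Finset.sum_congr rfl fun r _ => D.map_smul_univ _ _
  rw [expand]
  refine Finset.sum_nonneg fun r _ => ?_
  by_cases hr : ∀ p, w p (r p) ≠ 0
  · exact mul_nonneg (Finset.prod_nonneg fun p _ => hw p _)
      (hA.det_submatrix_nonneg_of_monotone (hf r hr) hj)
  · push Not at hr
    obtain ⟨p, hp⟩ := hr
    rw [Finset.prod_eq_zero (Finset.mem_univ p) hp, zero_mul]

theorem sum_column_blocks [Preorder m] {n : Type*} [LinearOrder n] [Fintype n]
    {A : Matrix m n ℝ} (hA : TotallyNonneg A) {k : Type*} [LinearOrder k] {b : n → k}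
    (hb : Monotone b) {w : n → ℝ} (hw : ∀ j, 0 ≤ w j) :
    TotallyNonneg (Matrix.of fun p q => ∑ j, (if b j = q then w j else 0) * A p j) := by
  intro l i s hi hs
  rw [← Matrix.det_transpose]
  refine hA.transpose.det_sum_rows_nonneg (fun q j => ?_) (fun r hr q q' hq => ?_) hi
    (w := fun q j => if b j = s q then w j else 0) (f := fun _ j => j)
  · exact ite_nonneg (hw j) le_rfl
  · have mem_block (q) : b (r q) = s q := (ite_ne_right_iff.mp (hr q)).1
    rcases hq.eq_or_lt with rfl | hlt
    · exact le_rfl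
    · refine (hb.reflect_lt ?_).le
      rw [mem_block, mem_block]
      exact hs hlt

end TotallyNonneg

theorem totallyNonneg_diagonal {m : Type*} [LinearOrder m] {d : m → ℝ} (hd : ∀ i, 0 ≤ d i) :
    TotallyNonneg (Matrix.diagonal d) := by
  intro k i j hi hj
  by_cases hij : Set.range i ⊆ Set.range j
  · obtain rfl : i = j := by
      refine (hi.range_inj hj).mp (Set.eq_of_subset_of_ncard_le hij ?_)
      rw [Set.ncard_range_of_injective hi.injective, Set.ncard_range_of_injective hj.injective]
    rw [Matrix.submatrix_diagonal _ _ hi.injective, Matrix.det_diagonal]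
    exact Finset.prod_nonneg fun p _ => hd _
  · obtain ⟨_, ⟨p, rfl⟩, hp⟩ := Set.not_subset.mp hij
    refine (Matrix.det_eq_zero_of_row_eq_zero p fun q => ?_).ge
    exact Matrix.diagonal_apply_ne _ fun h => hp ⟨q, h.symm⟩

theorem totallyNonneg_step {m : Type*} [LinearOrder m] :
    TotallyNonneg (Matrix.of fun i j : m => if i ≤ j then (1 : ℝ) else 0) := by
  intro k
  induction k with
  | zero => intro i j _ _; simp only [Matrix.det_isEmpty, zero_le_one]
  | succ k ih =>
    intro i j hi hj
    by_cases h0 : i 0 ≤ j 0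
    · by_cases h1 : ∃ p : Fin (k + 1), p ≠ 0 ∧ i p ≤ j 0
      · obtain ⟨p, hp, hpj⟩ := h1
        refine (Matrix.det_zero_of_row_eq hp (funext fun q => ?_)).ge
        have hq : j 0 ≤ j q := hj.monotone (Fin.zero_le q)
        simp only [Matrix.submatrix_apply, Matrix.of_apply, if_pos (hpj.trans hq),
          if_pos (h0.trans hq)]
      · push Not at h1
        have below (p : Fin k) : ¬ i p.succ ≤ j 0 := (h1 _ p.succ_ne_zero).not_ge
        have minor := ih (i ∘ Fin.succ) (j ∘ Fin.succ) (hi.comp Fin.strictMono_succ)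
          (hj.comp Fin.strictMono_succ)
        rw [Matrix.det_succ_column_zero, Fin.sum_univ_succ]
        simpa [h0, below] using minor
    · refine (Matrix.det_eq_zero_of_column_eq_zero (0 : Fin (k + 1))
        fun p => if_neg fun h : i p ≤ j 0 => ?_).ge
      exact h0 ((hi.monotone (Fin.zero_le p)).trans h)

theorem isTotallyPositive_indicator_Ici (s : ℕ) :
    IsTotallyPositive fun k => if s ≤ k then 1 else 0 := by
  have eq_shifted_step : toeplitz (fun k => if s ≤ k then 1 else 0) =
      (Matrix.of fun i j : ℕ => if i ≤ j then (1 : ℝ) else 0).submatrix (· + s) id := by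
    ext i j
    simp only [toeplitz, Matrix.of_apply, Matrix.submatrix_apply, id]
    split_ifs <;> first | rfl | omega
  rw [isTotallyPositive_iff, eq_shifted_step]
  exact totallyNonneg_step.submatrix add_left_strictMono strictMono_id

theorem submatrix_succAbove_mulVec {m : Type*} {k : ℕ} {V : Matrix m (Fin (k + 1)) ℝ}
    {d : Fin (k + 1) → ℝ} (hd : V.mulVec d = 0) {q : Fin (k + 1)} (hq : d q ≠ 0)
    (c : Fin (k + 1) → ℝ) :
    (V.submatrix id q.succAbove).mulVec ((c - (c q / d q) • d) ∘ q.succAbove) = V.mulVec c := by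
  have vanish : (c - (c q / d q) • d) q = 0 := by
    rw [Pi.sub_apply, Pi.smul_apply, smul_eq_mul, div_mul_cancel₀ _ hq, sub_self]
  calc
    _ = V.mulVec (c - (c q / d q) • d) := by
      ext i
      rw [Matrix.mulVec, Matrix.mulVec, dotProduct, dotProduct, Fin.sum_univ_succAbove _ q, vanish,
        mul_zero, zero_add]
      rfl
    _ = V.mulVec c := by rw [Matrix.mulVec_sub, Matrix.mulVec_smul, hd, smul_zero, sub_zero]

namespace TotallyNonneg

-- Expand the vanishing determinant of `(V c | V)` along its first column: all terms are
-- nonnegative.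
theorem det_submatrix_castSucc_eq_zero {k : ℕ} {V : Matrix (Fin (k + 1)) (Fin k) ℝ}
    (hV : TotallyNonneg V) {c : Fin k → ℝ}
    (hc : ∀ i : Fin (k + 1), 0 < (-1 : ℝ) ^ (i : ℕ) * V.mulVec c i) :
    (V.submatrix Fin.castSucc id).det = 0 := by
  let A : Matrix (Fin (k + 1)) (Fin (k + 1)) ℝ := .of fun i => Fin.cons (V.mulVec c i) (V i)
  have det_A : A.det = 0 := by
    refine Matrix.exists_mulVec_eq_zero_iff.mp ⟨Fin.cons (-1) c, fun h => ?_, funext fun i => ?_⟩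
    · simpa using congrFun h 0
    · simp [A, Matrix.mulVec, dotProduct, Fin.sum_univ_succ]
  have minor (i : Fin (k + 1)) :
      A.submatrix i.succAbove Fin.succ = V.submatrix i.succAbove id := by
    ext p q
    simp only [A, Matrix.submatrix_apply, Matrix.of_apply, Fin.cons_succ, id]
  have term_nonneg (i : Fin (k + 1)) :
      0 ≤ (-1 : ℝ) ^ (i : ℕ) * A i 0 * (A.submatrix i.succAbove Fin.succ).det := by
    rw [minor]
    exact mul_nonneg (hc i).le (hV _ _ _ (Fin.strictMono_succAbove i) strictMono_id)
  rw [Matrix.det_succ_column_zero,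
    Finset.sum_eq_zero_iff_of_nonneg fun i _ => term_nonneg i] at det_A
  have last_term := det_A (Fin.last k) (Finset.mem_univ _)
  rw [minor, Fin.succAbove_last] at last_term
  exact (mul_eq_zero.mp last_term).resolve_left (hc (Fin.last k)).ne'

theorem not_mulVec_alternating {k : ℕ} {V : Matrix (Fin (k + 1)) (Fin k) ℝ}
    (hV : TotallyNonneg V) (c : Fin k → ℝ) :
    ¬ ∀ i : Fin (k + 1), 0 < (-1 : ℝ) ^ (i : ℕ) * V.mulVec c i := by
  intro hc
  have singular := hV.det_submatrix_castSucc_eq_zero hc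
  induction k with
  | zero => simp only [Matrix.det_isEmpty, one_ne_zero] at singular
  | succ k ih =>
    obtain ⟨d, hd, hVd⟩ := Matrix.exists_mulVec_eq_zero_iff.mpr singular
    obtain ⟨q, hq⟩ := Function.ne_iff.mp hd
    have hV' : TotallyNonneg ((V.submatrix Fin.castSucc id).submatrix id q.succAbove) :=
      hV.submatrix Fin.strictMono_castSucc (Fin.strictMono_succAbove q)
    have hc' (i : Fin (k + 1)) : 0 < (-1 : ℝ) ^ (i : ℕ) *
        ((V.submatrix Fin.castSucc id).submatrix id q.succAbove).mulVec
          ((c - (c q / d q) • d) ∘ q.succAbove) i := by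
      rw [submatrix_succAbove_mulVec hVd hq]
      exact hc i.castSucc
    exact ih hV' _ hc' (hV'.det_submatrix_castSucc_eq_zero hc')

theorem not_mulVec_alternating_of_blocks {k : ℕ} {n : Type*} [LinearOrder n] [Fintype n]
    {A : Matrix (Fin (k + 1)) n ℝ} (hA : TotallyNonneg A) {b : n → Fin k} (hb : Monotone b)
    {x : n → ℝ} (hx : ∀ j, 0 ≤ (-1 : ℝ) ^ (b j : ℕ) * x j) :
    ¬ ∀ i : Fin (k + 1), 0 < (-1 : ℝ) ^ (i : ℕ) * A.mulVec x i := by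
  have block_sums : (Matrix.of fun p q => ∑ j, (if b j = q then (-1 : ℝ) ^ (b j : ℕ) * x j else 0)
      * A p j).mulVec (fun q => (-1 : ℝ) ^ (q : ℕ)) = A.mulVec x := by
    ext i
    simp only [Matrix.mulVec, dotProduct, Matrix.of_apply, Finset.sum_mul]
    rw [Finset.sum_comm]
    refine Finset.sum_congr rfl fun j _ => ?_
    simp only [ite_mul, zero_mul, Finset.sum_ite_eq, Finset.mem_univ, if_true]
    have sign_sq : ((-1 : ℝ) ^ (b j : ℕ)) * (-1 : ℝ) ^ (b j : ℕ) = 1 := by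
      rw [← mul_pow, neg_one_mul, neg_neg, one_pow]
    linear_combination (A i j * x j) * sign_sq
  rw [← block_sums]
  exact (hA.sum_column_blocks hb hx).not_mulVec_alternating _

end TotallyNonneg

/-! ### Real-rootedness and total positivity -/

theorem exists_pos_forall_add_mul_pos {ι : Type*} [Finite ι] {u : ι → ℝ} (hu : ∀ i, 0 < u i)
    (v : ι → ℝ) : ∃ ε > 0, ∀ i, 0 < u i + ε * v i := by
  have near_zero : ∀ᶠ ε in nhdsWithin (0 : ℝ) (Set.Ioi 0), ∀ i, 0 < u i + ε * v i := by
    refine Filter.eventually_all.mpr fun i => nhdsWithin_le_nhds ?_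
    have cont : Continuous fun ε : ℝ => u i + ε * v i := by fun_prop
    exact (cont.tendsto 0).eventually_const_lt (by simpa only [zero_mul, add_zero] using hu i)
  obtain ⟨ε, h, hε⟩ := (near_zero.and self_mem_nhdsWithin).exists
  exact ⟨ε, hε, h⟩

theorem exists_pos_forall_sin_ne_zero (θ : ℝ) :
    ∃ φ > 0, ∀ k : ℕ, Real.sin (θ * k + φ) ≠ 0 := by
  have bad_countable : (Set.range fun p : ℤ × ℕ => p.1 * Real.pi - θ * p.2).Countable :=
    Set.countable_range _
  obtain ⟨φ, hφ, hpos⟩ := (bad_countable.dense_compl ℝ).exists_gt 0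
  refine ⟨φ, hpos, fun k hk => hφ ?_⟩
  obtain ⟨n, hn⟩ := Real.sin_eq_zero_iff.mp hk
  exact ⟨(n, k), by linarith⟩

theorem neg_one_pow_floor_mul_sin_pos {u : ℝ} (hu : 0 ≤ u) (hs : Real.sin u ≠ 0) :
    0 < (-1 : ℝ) ^ ⌊u / Real.pi⌋₊ * Real.sin u := by
  have hpi := Real.pi_pos
  have lower := (le_div_iff₀ hpi).mp (Nat.floor_le (div_nonneg hu hpi.le))
  have upper := (div_lt_iff₀ hpi).mp (Nat.lt_floor_add_one (u / Real.pi))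
  refine lt_of_le_of_ne ?_ (mul_ne_zero (pow_ne_zero _ (by norm_num)) hs).symm
  rw [← Real.sin_sub_nat_mul_pi]
  exact Real.sin_nonneg_of_nonneg_of_le_pi (by linarith) (by linarith)

-- On `0, …, K + N` the phase `θ j + φ` advances by less than `K π` once `K (π - θ) > θ N + φ`.
theorem exists_sin_sign_blocks {θ : ℝ} (hθ : 0 < θ) (hθπ : θ < Real.pi) (N : ℕ) :
    ∃ (φ : ℝ) (K : ℕ) (b : Fin (K + N + 1) → Fin K), Monotone b ∧
      ∀ j, 0 < (-1 : ℝ) ^ (b j : ℕ) * Real.sin (θ * (j : ℕ) + φ) := by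
  have hpi := Real.pi_pos
  obtain ⟨φ, hφ, hsin⟩ := exists_pos_forall_sin_ne_zero θ
  obtain ⟨K, hK⟩ := exists_nat_gt ((θ * N + φ) / (Real.pi - θ))
  rw [div_lt_iff₀ (by linarith)] at hK
  have phase_nonneg (j : ℕ) : 0 ≤ θ * j + φ := by positivity
  have floor_lt (j : Fin (K + N + 1)) : ⌊(θ * (j : ℕ) + φ) / Real.pi⌋₊ < K := by
    have hj : ((j : ℕ) : ℝ) ≤ K + N := by exact_mod_cast Nat.lt_succ_iff.mp j.isLt
    rw [Nat.floor_lt (div_nonneg (phase_nonneg j) hpi.le), div_lt_iff₀ hpi]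
    nlinarith
  refine ⟨φ, K, fun j => ⟨_, floor_lt j⟩, fun j j' hj => ?_, fun j => ?_⟩
  · refine Fin.mk_le_mk.mpr (Nat.floor_le_floor ?_)
    have : ((j : ℕ) : ℝ) ≤ (j' : ℕ) := by exact_mod_cast hj
    gcongr
  · exact neg_one_pow_floor_mul_sin_pos (phase_nonneg j) (hsin j)

theorem sum_toeplitz_coeff_smul_pow {S : Type*} [CommRing S] [Algebra ℝ S] (p : ℝ[X]) (z : S)
    {i n : ℕ} (h : i + p.natDegree < n) :
    ∑ j : Fin n, toeplitz p.coeff i j • z ^ (j : ℕ) = z ^ i * aeval z p := by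
  obtain ⟨d, rfl⟩ := Nat.exists_eq_add_of_le (le_of_add_le_left h.le)
  have before_diagonal : ∑ j ∈ Finset.range i, toeplitz p.coeff i j • z ^ j = 0 :=
    Finset.sum_eq_zero fun j hj => by
      rw [toeplitz, Matrix.of_apply, if_neg (not_le.mpr (Finset.mem_range.mp hj)), zero_smul]
  rw [Fin.sum_univ_eq_sum_range fun j => toeplitz p.coeff i j • z ^ j, Finset.sum_range_add,
    before_diagonal, zero_add, aeval_eq_sum_range' (Nat.lt_of_add_lt_add_left h), Finset.mul_sum]
  refine Finset.sum_congr rfl fun k _ => ?_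
  rw [toeplitz, Matrix.of_apply, if_pos (Nat.le_add_right i k), Nat.add_sub_cancel_left, pow_add,
    mul_smul_comm]

theorem im_exp_mul_pow (φ : ℝ) (z : ℂ) (j : ℕ) :
    (Complex.exp (φ * Complex.I) * z ^ j).im = ‖z‖ ^ j * Real.sin (z.arg * j + φ) := by
  have polar : Complex.exp (φ * Complex.I) * z ^ j =
      ((‖z‖ ^ j : ℝ) : ℂ) * Complex.exp (((z.arg * j + φ : ℝ) : ℂ) * Complex.I) := by
    conv_lhs => rw [← Complex.norm_mul_exp_arg_mul_I z, mul_pow, ← Complex.exp_nat_mul]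
    rw [mul_left_comm, ← Complex.exp_add]
    push_cast
    ring_nf
  rw [polar, Complex.im_ofReal_mul, Complex.exp_ofReal_mul_I_im]

-- Adding a small multiple of `t ^ j`, where `t < 0` is not a root, makes the image of `u` strictly
-- alternating.
theorem IsTotallyPositive.toeplitz_mulVec_ne_zero_of_blocks {p : ℝ[X]}
    (hp : IsTotallyPositive p.coeff) (hp0 : p ≠ 0) {K : ℕ} {b : Fin (K + p.natDegree + 1) → Fin K}
    (hb : Monotone b) {u : Fin (K + p.natDegree + 1) → ℝ}
    (hu : ∀ j, 0 < (-1 : ℝ) ^ (b j : ℕ) * u j) :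
    ((toeplitz p.coeff).submatrix (Fin.val : Fin (K + 1) → ℕ) Fin.val).mulVec u ≠ 0 := by
  intro annihilated
  obtain ⟨t, ht, not_root⟩ := (Set.Iio_infinite (0 : ℝ)).exists_notMem_finset p.roots.toFinset
  have eval_t : p.eval t ≠ 0 := fun h => not_root (by simpa [hp0] using h)
  let v : Fin (K + p.natDegree + 1) → ℝ := fun j => p.eval t * t ^ (j : ℕ)
  have image_v (i : Fin (K + 1)) :
      ((toeplitz p.coeff).submatrix (Fin.val : Fin (K + 1) → ℕ) Fin.val).mulVec v i =
        p.eval t ^ 2 * t ^ (i : ℕ) := by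
    have h := sum_toeplitz_coeff_smul_pow p t (show i + p.natDegree < K + p.natDegree + 1 by omega)
    rw [coe_aeval_eq_eval] at h
    rw [sq, mul_assoc, mul_comm _ (t ^ (i : ℕ)), ← h, Finset.mul_sum]
    simp only [Matrix.mulVec, dotProduct, Matrix.submatrix_apply, v, smul_eq_mul,
      mul_left_comm (p.eval t)]
  obtain ⟨ε, hε, perturbed_sign⟩ :=
    exists_pos_forall_add_mul_pos hu fun j => (-1 : ℝ) ^ (b j : ℕ) * v j
  refine ((isTotallyPositive_iff.mp hp).submatrix Fin.val_strictMono
    Fin.val_strictMono).not_mulVec_alternating_of_blocks hb (x := u + ε • v)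
    (fun j => ?_) fun i => ?_
  · rw [Pi.add_apply, Pi.smul_apply, smul_eq_mul, mul_add, mul_left_comm _ ε]
    exact (perturbed_sign j).le
  · have sign : (-1 : ℝ) ^ (i : ℕ) * t ^ (i : ℕ) = (-t) ^ (i : ℕ) := by rw [← mul_pow, neg_one_mul]
    rw [Matrix.mulVec_add, Matrix.mulVec_smul, annihilated, zero_add, Pi.smul_apply, smul_eq_mul,
      image_v, mul_left_comm, mul_left_comm _ (p.eval t ^ 2), sign]
    have : 0 < -t := neg_pos.mpr ht
    positivity

-- If `z` were a root, the Toeplitz matrix would annihilate the vector `Im (exp (i φ) z ^ j)`.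
theorem IsTotallyPositive.aeval_ne_zero_of_im_pos {p : ℝ[X]} (hp : IsTotallyPositive p.coeff)
    (hp0 : p ≠ 0) {z : ℂ} (hz : 0 < z.im) : aeval z p ≠ 0 := by
  intro root
  have arg_pos : 0 < z.arg := by
    refine (Complex.arg_nonneg_iff.mpr hz.le).lt_of_ne fun h => hz.ne' ?_
    exact (Complex.arg_eq_zero_iff.mp h.symm).2
  have arg_lt_pi : z.arg < Real.pi := Complex.arg_lt_pi_iff.mpr (Or.inr hz.ne')
  have z_ne_zero : z ≠ 0 := fun h => hz.ne' (by rw [h, Complex.zero_im])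
  obtain ⟨φ, K, b, hb, sin_sign⟩ := exists_sin_sign_blocks arg_pos arg_lt_pi p.natDegree
  refine hp.toeplitz_mulVec_ne_zero_of_blocks hp0 hb
    (u := fun j => (Complex.exp (φ * Complex.I) * z ^ (j : ℕ)).im) (fun j => ?_)
    (funext fun i => ?_)
  · rw [im_exp_mul_pow, mul_left_comm]
    exact mul_pos (pow_pos (norm_pos_iff.mpr z_ne_zero) _) (sin_sign j)
  · have h := sum_toeplitz_coeff_smul_pow p z (show i + p.natDegree < K + p.natDegree + 1 by omega)
    rw [root, mul_zero] at h
    have h_im := congrArg (fun s => (Complex.exp (φ * Complex.I) * s).im) h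
    simpa only [Finset.mul_sum, mul_smul_comm, Complex.im_sum, Complex.smul_im, smul_eq_mul,
      mul_zero, Complex.zero_im, Matrix.mulVec, dotProduct,
      Matrix.submatrix_apply, Pi.zero_apply] using h_im

theorem IsTotallyPositive.mem_range_of_aeval_eq_zero {p : ℝ[X]} (hp : IsTotallyPositive p.coeff)
    (hp0 : p ≠ 0) {z : ℂ} (hz : aeval z p = 0) : ∃ x : ℝ, z = x := by
  have conj_root : aeval (starRingEnd ℂ z) p = 0 := by rw [aeval_conj, hz, map_zero]
  have im_eq_zero : z.im = 0 := by
    refine le_antisymm (not_lt.mp fun h => hp.aeval_ne_zero_of_im_pos hp0 h hz)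
      (not_lt.mp fun h => hp.aeval_ne_zero_of_im_pos hp0 ?_ conj_root)
    rwa [Complex.conj_im, neg_pos]
  exact ⟨z.re, Complex.ext rfl im_eq_zero⟩

theorem isTotallyPositive_coeff_C {c : ℝ} (hc : 0 ≤ c) : IsTotallyPositive (C c : ℝ[X]).coeff := by
  have toeplitz_eq : toeplitz (C c : ℝ[X]).coeff = Matrix.diagonal fun _ => c := by
    ext i j
    simp only [toeplitz, Matrix.of_apply, Matrix.diagonal_apply, coeff_C]
    split_ifs <;> first | rfl | omega
  rw [isTotallyPositive_iff, toeplitz_eq]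
  exact totallyNonneg_diagonal fun _ => hc

-- The rows of the new Toeplitz matrix are nonnegative combinations of consecutive old rows.
theorem IsTotallyPositive.coeff_X_sub_C_mul {p : ℝ[X]} (hp : IsTotallyPositive p.coeff) {x : ℝ}
    (hx : x ≤ 0) : IsTotallyPositive ((X - C x) * p).coeff := by
  intro k i j hi hj
  have row_sum (p' q : Fin k) : toeplitz ((X - C x) * p).coeff (i p') (j q) =
      ∑ t : Fin 2, ![-x, 1] t * toeplitz p.coeff (i p' + t) (j q) := by
    simp only [toeplitz, Matrix.of_apply, Fin.sum_univ_two, sub_mul, coeff_sub, coeff_C_mul]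
    rcases le_or_gt (i p') (j q) with h | h
    · obtain ⟨_ | d, hd⟩ := Nat.exists_eq_add_of_le h
      · simp [hd]
      · have : i p' + (d + 1) - (i p' + 1) = d := by omega
        simp [hd, this, coeff_X_mul, sub_eq_neg_add]
    · simp [h.not_ge, (Nat.lt_succ_of_lt h).not_ge]
  have expand := (isTotallyPositive_iff.mp hp).det_sum_rows_nonneg (w := fun _ => ![-x, 1])
    (f := fun p' t => i p' + t) (fun _ t => ?_) (fun r _ p' q h => ?_) hj
  · simp only [← row_sum] at expand
    exact expand
  · fin_cases t
    · exact neg_nonneg.mpr hx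
    · exact zero_le_one
  · rcases h.eq_or_lt with rfl | h
    · exact le_rfl
    · have := hi h
      have := (r p').isLt
      dsimp only
      omega

theorem nonpos_of_isRoot_of_coeff_nonneg {p : ℝ[X]} (hp0 : p ≠ 0) (hp : ∀ k, 0 ≤ p.coeff k)
    {x : ℝ} (hx : p.IsRoot x) : x ≤ 0 := by
  by_contra! hpos
  have leading_pos : 0 < p.leadingCoeff :=
    (hp p.natDegree).lt_of_ne (leadingCoeff_ne_zero.mpr hp0).symm
  have eval_pos : 0 < p.eval x := by
    rw [eval_eq_sum_range]
    refine Finset.sum_pos' (fun k _ => mul_nonneg (hp k) (pow_pos hpos k).le) ⟨p.natDegree, ?_, ?_⟩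
    · exact Finset.self_mem_range_succ _
    · exact mul_pos leading_pos (pow_pos hpos _)
  exact eval_pos.ne' hx

theorem isTotallyPositive_coeff_of_splits {p : ℝ[X]} (hs : p.Splits) (hp : ∀ k, 0 ≤ p.coeff k) :
    IsTotallyPositive p.coeff := by
  rcases eq_or_ne p 0 with rfl | hp0
  · rw [← C_0]
    exact isTotallyPositive_coeff_C le_rfl
  have roots_nonpos : ∀ x ∈ p.roots, x ≤ 0 := fun x hx =>
    nonpos_of_isRoot_of_coeff_nonneg hp0 hp (isRoot_of_mem_roots hx)
  rw [hs.eq_prod_roots, mul_comm]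
  generalize p.roots = s at roots_nonpos ⊢
  induction s using Multiset.induction with
  | empty => simpa using isTotallyPositive_coeff_C (hp p.natDegree)
  | cons x s ih =>
    rw [Multiset.map_cons, Multiset.prod_cons, mul_assoc]
    exact (ih fun y hy => roots_nonpos y (Multiset.mem_cons_of_mem hy)).coeff_X_sub_C_mul
      (roots_nonpos x (Multiset.mem_cons_self x s))

theorem splits_of_forall_aeval_eq_zero {p : ℝ[X]}
    (hp : ∀ z : ℂ, aeval z p = 0 → ∃ x : ℝ, z = x) : p.Splits := by
  refine Splits.of_splits_map (algebraMap ℝ ℂ) (IsAlgClosed.splits _) fun z hz => ?_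
  have root : aeval z p = 0 := by
    simpa only [IsRoot.def, eval_map_algebraMap] using isRoot_of_mem_roots hz
  obtain ⟨x, rfl⟩ := hp z root
  exact ⟨x, rfl⟩

theorem splits_of_alternating {n : ℕ} {p : ℝ[X]} (hdeg : p.natDegree ≤ n + 1)
    (hlead : 0 ≤ p.leadingCoeff) {y : Fin n → ℝ} (hy : StrictAnti y)
    (hp : ∀ i : Fin n, 0 ≤ (-1) ^ ((i : ℕ) + 1) * p.eval (y i)) : p.Splits := by
  induction n generalizing p with
  | zero => exact Splits.of_natDegree_le_one hdeg
  | succ n ih =>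
    rcases le_or_gt p.natDegree 1 with hdeg1 | hdeg1
    · exact Splits.of_natDegree_le_one hdeg1
    have eval_nonpos : p.eval (y 0) ≤ 0 := by simpa using hp 0
    obtain ⟨x, hx, eval_x⟩ : ∃ x, y 0 ≤ x ∧ p.eval x = 0 := by
      have pos_at_top : ∀ᶠ x in Filter.atTop, 0 < p.eval x :=
        (p.tendsto_atTop_of_leadingCoeff_nonneg
          (natDegree_pos_iff_degree_pos.mp (by omega)) hlead).eventually_gt_atTop 0
      obtain ⟨M, hM, eval_M⟩ := ((Filter.eventually_ge_atTop (y 0)).and pos_at_top).exists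
      obtain ⟨x, hx, eval_x⟩ := intermediate_value_Icc hM p.continuous.continuousOn
        ⟨eval_nonpos, eval_M.le⟩
      exact ⟨x, hx.1, eval_x⟩
    obtain ⟨q, rfl⟩ := dvd_iff_isRoot.mpr eval_x
    rw [leadingCoeff_mul, leadingCoeff_X_sub_C, one_mul] at hlead
    rw [natDegree_mul (X_sub_C_ne_zero x) (by rintro rfl; simp at hdeg1), natDegree_X_sub_C] at hdeg
    refine (Splits.X_sub_C x).mul (ih (by omega) hlead (hy.comp_strictMono Fin.strictMono_succ) ?_)
    intro i
    have below : y i.succ - x < 0 := by linarith [hy i.succ_pos]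
    have h := hp i.succ
    rw [eval_mul, eval_sub, eval_X, eval_C, Fin.val_succ, pow_succ] at h
    refine nonneg_of_mul_nonneg_right ?_ (neg_pos.mpr below)
    simp only [Function.comp_apply]
    linarith

theorem eval_lt_eval_of_roots_lt {p : ℝ[X]} (hp : p.Splits) (hdeg : 0 < p.natDegree)
    (hlead : 0 < p.leadingCoeff) {x y : ℝ} (hroots : ∀ r ∈ p.roots, r < x) (hxy : x < y) :
    p.eval x < p.eval y := by
  rw [hp.eval_eq_prod_roots, hp.eval_eq_prod_roots]
  refine mul_lt_mul_of_pos_left (Multiset.prod_map_lt_prod_map ?_ _ _ ?_ ?_) hlead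
  · exact hp.roots_ne_zero hdeg.ne'
  · exact fun r hr => sub_pos.mpr (hroots r hr)
  · exact fun r _ => sub_lt_sub_right hxy r

theorem exists_isRoot_mem_Ioo_of_eval_eq {p : ℝ[X]} (hp : p.Splits) (hdeg : 0 < p.natDegree)
    (hcoeff : ∀ k, 0 ≤ p.coeff k) {x : ℝ} (hx : x < 0) (heval : p.eval x = p.eval 0)
    (h0 : p.eval 0 ≠ 0) : ∃ r ∈ Set.Ioo x 0, p.IsRoot r := by
  have p_ne_zero : p ≠ 0 := ne_zero_of_natDegree_gt hdeg
  have lead_pos : 0 < p.leadingCoeff :=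
    (hcoeff p.natDegree).lt_of_ne (leadingCoeff_ne_zero.mpr p_ne_zero).symm
  obtain ⟨r, hr, x_le_r⟩ : ∃ r ∈ p.roots, x ≤ r := by
    by_contra! hroots
    exact (eval_lt_eval_of_roots_lt hp hdeg lead_pos hroots hx).ne heval
  have root := isRoot_of_mem_roots hr
  refine ⟨r, ⟨x_le_r.lt_of_ne ?_, (nonpos_of_isRoot_of_coeff_nonneg p_ne_zero hcoeff root).lt_of_ne
    ?_⟩, root⟩
  · rintro rfl
    exact h0 (heval.symm.trans root)
  · rintro rfl
    exact h0 root

theorem exists_monotone_eq_C_mul_prod {p : ℝ[X]} (hp : p.Splits) {n : ℕ} (hn : p.natDegree = n) :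
    ∃ r : Fin n → ℝ, Monotone r ∧ p = C p.leadingCoeff * ∏ i, (X - C (r i)) := by
  have length_eq : (p.roots.sort (· ≤ ·)).length = n := by
    rw [Multiset.length_sort, ← hp.natDegree_eq_card_roots, hn]
  subst length_eq
  refine ⟨(p.roots.sort (· ≤ ·)).get, ?_, ?_⟩
  · exact (p.roots.pairwise_sort (· ≤ ·)).sortedLE.monotone_get
  · have product := Fin.prod_univ_fun_getElem (p.roots.sort (· ≤ ·)) fun x => X - C x
    rw [← Multiset.prod_coe, ← Multiset.map_coe, Multiset.sort_eq] at product
    exact hp.eq_prod_roots.trans (by rw [← product]; rfl)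

/-- The polynomial `∑_{k < n} a_k x^k` generated by the first `n` terms of a sequence. -/
noncomputable def genPoly (n : ℕ) (a : ℕ → ℝ) : ℝ[X] :=
  ∑ k ∈ Finset.range n, monomial k (a k)

theorem coeff_genPoly (n : ℕ) (a : ℕ → ℝ) (k : ℕ) :
    (genPoly n a).coeff k = if k < n then a k else 0 := by
  simp only [genPoly, finsetSum_coeff, coeff_monomial, Finset.sum_ite_eq', Finset.mem_range]

theorem coeff_genPoly_of_support {n : ℕ} {a : ℕ → ℝ} (ha : ∀ k, n ≤ k → a k = 0) :
    (genPoly n a).coeff = a := by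
  ext k
  rw [coeff_genPoly]
  exact ite_eq_left_iff.mpr fun h => (ha k (not_lt.mp h)).symm

theorem aeval_genPoly {S : Type*} [CommRing S] [Algebra ℝ S] (n : ℕ) (a : ℕ → ℝ) (z : S) :
    aeval z (genPoly n a) = ∑ k ∈ Finset.range n, algebraMap ℝ S (a k) * z ^ k := by
  simp only [genPoly, map_sum, aeval_monomial]

theorem eval_genPoly (n : ℕ) (a : ℕ → ℝ) (x : ℝ) :
    (genPoly n a).eval x = ∑ k ∈ Finset.range n, a k * x ^ k := by
  simp only [genPoly, eval_finsetSum, eval_monomial]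

theorem eval_genPoly_mul_geometric (n : ℕ) (a b : ℕ → ℝ) (g l x : ℝ) :
    (genPoly n fun k => a k * (g * l ^ k * b k)).eval x =
      g * (genPoly n fun k => a k * b k).eval (l * x) := by
  rw [eval_genPoly, eval_genPoly, Finset.mul_sum]
  exact Finset.sum_congr rfl fun k _ => by ring

theorem natDegree_genPoly_le {n d : ℕ} {a : ℕ → ℝ} (ha : ∀ k, d < k → k < n → a k = 0) :
    (genPoly n a).natDegree ≤ d := by
  refine natDegree_le_iff_coeff_eq_zero.mpr fun k hk => ?_
  rw [coeff_genPoly]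
  exact ite_eq_right_iff.mpr (ha k hk)

theorem natDegree_genPoly_succ {n : ℕ} {a : ℕ → ℝ} (ha : a n ≠ 0) :
    (genPoly (n + 1) a).natDegree = n := by
  refine natDegree_eq_of_le_of_coeff_ne_zero (natDegree_genPoly_le fun k hn hk => ?_) ?_
  · omega
  · rwa [coeff_genPoly, if_pos n.lt_succ_self]

theorem leadingCoeff_genPoly_succ {n : ℕ} {a : ℕ → ℝ} (ha : a n ≠ 0) :
    (genPoly (n + 1) a).leadingCoeff = a n := by
  rw [leadingCoeff, natDegree_genPoly_succ ha, coeff_genPoly, if_pos n.lt_succ_self]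

theorem genPoly_succ (n : ℕ) (a : ℕ → ℝ) :
    genPoly (n + 1) a = C (a 0) + X * genPoly n fun k => a (k + 1) := by
  rw [genPoly, genPoly, Finset.sum_range_succ', add_comm, Finset.mul_sum]
  congr 1
  exact Finset.sum_congr rfl fun k _ => (X_mul_monomial k _).symm

theorem coeff_genPoly_nonneg {n : ℕ} {a : ℕ → ℝ} (ha : ∀ k < n, 0 ≤ a k) (k : ℕ) :
    0 ≤ (genPoly n a).coeff k := by
  rw [coeff_genPoly]
  split_ifs with hk
  exacts [ha k hk, le_rfl]

/-! ### Multiply positive sequences -/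

theorem IsTotallyPositive.isMultiplyPositive {b : ℕ → ℝ} (hb : IsTotallyPositive b) (m : ℕ) :
    IsMultiplyPositive m b := fun n _ => hb n

namespace IsMultiplyPositive

variable {m : ℕ} {b : ℕ → ℝ}

theorem mul_geometric (hb : IsMultiplyPositive m b) {g l : ℝ} (hg : 0 ≤ g) (hl : 0 < l) :
    IsMultiplyPositive m fun k => g * l ^ k * b k := by
  intro n hn i j hi hj
  have factored : (Matrix.of fun p q : Fin n =>
      if i p ≤ j q then g * l ^ (j q - i p) * b (j q - i p) else 0) = Matrix.of fun p q =>
        (g / l ^ i p) * Matrix.of (fun p q : Fin n =>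
          l ^ j q *
            (Matrix.of fun p q : Fin n => if i p ≤ j q then b (j q - i p) else 0) p q) p q := by
    ext p q
    simp only [Matrix.of_apply]
    split_ifs with h
    · rw [pow_sub₀ l hl.ne' h]
      ring
    · ring
  rw [factored, Matrix.det_mul_column, Matrix.det_mul_row]
  have minor_nonneg := hb n hn i j hi hj
  positivity

theorem nonneg (hb : IsMultiplyPositive m b) (hm : 1 ≤ m) (k : ℕ) : 0 ≤ b k := by
  simpa using hb 1 hm ![0] ![k] (Subsingleton.strictMono _) (Subsingleton.strictMono _)

theorem mul_le_mul_of_lt (hb : IsMultiplyPositive m b) (hm : 2 ≤ m) {k l : ℕ} (hkl : k < l) :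
    b k * b (l + 1) ≤ b (k + 1) * b l := by
  have minor : 0 ≤ !![b (k + 1), b (l + 1); b k, b l].det := by
    convert hb 2 hm ![0, 1] ![k + 1, l + 1] (by simp) (by simpa) with p q
    fin_cases p <;> fin_cases q <;> simp
  rw [Matrix.det_fin_two_of] at minor
  linarith

theorem eq_zero_of_succ_eq_zero (hb : IsMultiplyPositive m b) (hm : 2 ≤ m) {k : ℕ}
    (hk : b k ≠ 0) (hk' : b (k + 1) = 0) {l : ℕ} (hl : k < l) : b l = 0 := by
  obtain ⟨l, rfl⟩ := Nat.exists_eq_succ_of_ne_zero (Nat.ne_zero_of_lt hl)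
  rcases (Nat.lt_succ_iff.mp hl).eq_or_lt with rfl | hkl
  · exact hk'
  · have minor := hb.mul_le_mul_of_lt hm hkl
    have nonneg := hb.nonneg (one_le_two.trans hm)
    rw [hk', zero_mul] at minor
    exact (nonpos_of_mul_nonpos_right minor ((nonneg k).lt_of_ne hk.symm)).antisymm (nonneg _)

theorem minor_012_123_nonneg (hb : IsMultiplyPositive m b) (hm : 3 ≤ m) :
    0 ≤ b 1 ^ 3 - 2 * b 0 * b 1 * b 2 + b 0 ^ 2 * b 3 := by
  have minor : 0 ≤ !![b 1, b 2, b 3; b 0, b 1, b 2; 0, b 0, b 1].det := by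
    convert hb 3 hm ![0, 1, 2] ![1, 2, 3] (by simp) (by simp) with p q
    fin_cases p <;> fin_cases q <;> rfl
  simp only [Matrix.det_fin_three, Matrix.of_apply, Matrix.cons_val] at minor
  linarith

theorem minor_023_234_nonneg (hb : IsMultiplyPositive m b) (hm : 3 ≤ m) :
    0 ≤ b 2 * (b 1 ^ 2 - b 0 * b 2) - b 0 * b 1 * b 3 + b 0 ^ 2 * b 4 := by
  have minor : 0 ≤ !![b 2, b 3, b 4; b 0, b 1, b 2; 0, b 0, b 1].det := by
    convert hb 3 hm ![0, 2, 3] ![2, 3, 4] (by simp) (by simp) with p q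
    fin_cases p <;> fin_cases q <;> rfl
  simp only [Matrix.det_fin_three, Matrix.of_apply, Matrix.cons_val] at minor
  linarith

theorem minor_012_234_nonneg (hb : IsMultiplyPositive m b) (hm : 3 ≤ m) :
    0 ≤ b 2 * (b 2 ^ 2 - b 1 * b 3) - b 3 * (b 1 * b 2 - b 0 * b 3) +
      b 4 * (b 1 ^ 2 - b 0 * b 2) := by
  have minor : 0 ≤ !![b 2, b 3, b 4; b 1, b 2, b 3; b 0, b 1, b 2].det := by
    convert hb 3 hm ![0, 1, 2] ![2, 3, 4] (by simp) (by simp) with p q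
    fin_cases p <;> fin_cases q <;> rfl
  simp only [Matrix.det_fin_three, Matrix.of_apply, Matrix.cons_val] at minor
  linarith

theorem one_sub_le_three_mul_of_normalized (hb : IsMultiplyPositive m b) (hm : 3 ≤ m)
    (h1 : b 1 = 1) (h2 : b 2 = 1) : 1 - b 4 ≤ 3 * (1 - b 3) := by
  have b0_nonneg := hb.nonneg (by omega) 0
  have b0_le : b 0 ≤ 1 := by simpa [h1, h2] using hb.mul_le_mul_of_lt (by omega) one_pos
  have b3_le : b 3 ≤ 1 := by simpa [h1, h2] using hb.mul_le_mul_of_lt (by omega) one_lt_two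
  have minor₁ := hb.minor_012_123_nonneg hm
  have minor₂ := hb.minor_023_234_nonneg hm
  have minor₃ := hb.minor_012_234_nonneg hm
  simp only [h1, h2] at minor₁ minor₂ minor₃
  rcases b0_le.eq_or_lt with h0 | h0
  · rw [h0] at minor₁ minor₂
    linarith
  have b0_mul_le : b 0 * (1 - b 3) ≤ 1 - b 0 := by
    rcases le_total (b 0) (1 / 2) with half | half
    · nlinarith [hb.nonneg (by omega) 3]
    · nlinarith
  refine sub_nonneg.mp (nonneg_of_mul_nonneg_right ?_ (sub_pos.mpr h0))
  nlinarith

end IsMultiplyPositive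

/-! ### Sign changes of the quartic -/

/-- Points `-y < -x < 0` where the polynomials generated by `a` and by its shift have known signs.
The upper bounds on `x` and `y` are what makes the signs of `∑ a_k b_k t^k` at `-x b_0 / b_1` and
`-y b_1 / b_2` follow from those of `∑ a_k t^k` for every three times positive `b`. -/
structure IsNodePair (a : ℕ → ℝ) (x y : ℝ) : Prop where
  pos : 0 < x
  lt : x < y
  eval_nonpos : (genPoly 5 a).eval (-x) ≤ 0
  two_mul_le : 2 * a 3 * x ≤ a 2
  eval_tail_eq_zero : (genPoly 4 fun k => a (k + 1)).eval (-y) = 0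
  three_mul_le : 3 * a 4 * y ≤ a 3

theorem exists_eval_neg_genPoly_four_eq {c : ℕ → ℝ} (hc : ∀ k ≤ 3, 0 < c k)
    (hs : (genPoly 4 c).Splits) :
    ∃ x y z, 0 < x ∧ x ≤ y ∧ y ≤ z ∧
      ∀ t, (genPoly 4 c).eval (-t) = c 3 * ((x - t) * (y - t) * (z - t)) := by
  have hdeg : (genPoly 4 c).natDegree = 3 := natDegree_genPoly_succ (hc 3 le_rfl).ne'
  have eval_zero : (genPoly 4 c).eval 0 = c 0 := by
    simp only [← coeff_zero_eq_eval_zero, coeff_genPoly, Nat.ofNat_pos, if_true]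
  obtain ⟨r, r_mono, factored⟩ := exists_monotone_eq_C_mul_prod hs hdeg
  have eval_neg (t : ℝ) : (genPoly 4 c).eval (-t) =
      c 3 * ((-r 2 - t) * (-r 1 - t) * (-r 0 - t)) := by
    rw [factored, leadingCoeff_genPoly_succ (hc 3 le_rfl).ne', Fin.prod_univ_three]
    simp only [eval_mul, eval_C, eval_sub, eval_X]
    ring
  refine ⟨-r 2, -r 1, -r 0, neg_pos.mpr ?_, ?_, ?_, eval_neg⟩
  · have root : (genPoly 4 c).IsRoot (r 2) := by
      simpa using eval_neg (-r 2)
    refine (nonpos_of_isRoot_of_coeff_nonneg (ne_zero_of_natDegree_gt (n := 0) (by omega))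
      (coeff_genPoly_nonneg (fun k hk => (hc k (by omega)).le)) root).lt_of_ne fun h => ?_
    rw [IsRoot, h, eval_zero] at root
    exact (hc 0 (by omega)).ne' root
  · exact neg_le_neg (r_mono (by decide))
  · exact neg_le_neg (r_mono (by decide))

theorem genPoly_four_vieta {c : ℕ → ℝ} {x y z : ℝ}
    (h : ∀ t, (genPoly 4 c).eval (-t) = c 3 * ((x - t) * (y - t) * (z - t))) :
    c 1 = c 3 * (x * y + x * z + y * z) ∧ c 2 = c 3 * (x + y + z) := by
  simp only [eval_genPoly, Finset.sum_range_succ, Finset.sum_range_zero] at h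
  constructor <;> linarith [h 0, h 1, h (-1)]

theorem eval_neg_genPoly_succ (n : ℕ) (a : ℕ → ℝ) (t : ℝ) :
    (genPoly (n + 1) a).eval (-t) = a 0 - t * (genPoly n fun k => a (k + 1)).eval (-t) := by
  rw [genPoly_succ, eval_add, eval_C, eval_mul, eval_X]
  ring

-- Of the two points `R` and `x - R`, where `-R` is a root, the smaller one is at most `x / 2`.
theorem exists_le_half_eval_neg_nonpos {a : ℕ → ℝ} (ha : ∀ k ≤ 4, 0 < a k)
    (hs : (genPoly 5 a).Splits) {x y z : ℝ} (hx : 0 < x) (hxy : x ≤ y) (hyz : y ≤ z)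
    (htail : ∀ t, (genPoly 4 fun k => a (k + 1)).eval (-t) = a 4 * ((x - t) * (y - t) * (z - t))) :
    ∃ t, 0 < t ∧ 2 * t ≤ x ∧ (genPoly 5 a).eval (-t) ≤ 0 := by
  have eval_neg (t : ℝ) : (genPoly 5 a).eval (-t) =
      a 0 - a 4 * (t * (x - t) * ((y - t) * (z - t))) := by
    rw [eval_neg_genPoly_succ, htail]
    ring
  have eval_zero : (genPoly 5 a).eval 0 = a 0 := by simpa using eval_neg 0
  have a0_pos := ha 0 (by omega)
  have a4_pos := ha 4 le_rfl
  have coeff_nonneg := coeff_genPoly_nonneg (n := 5) fun k hk => (ha k (by omega)).le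
  obtain ⟨r, ⟨x_lt, r_neg⟩, root⟩ := exists_isRoot_mem_Ioo_of_eval_eq hs
    (by rw [natDegree_genPoly_succ a4_pos.ne']; omega) coeff_nonneg (neg_neg_of_pos hx)
    (by rw [eval_zero, eval_neg]; ring) (eval_zero.trans_ne a0_pos.ne')
  obtain ⟨R, rfl⟩ : ∃ R, r = -R := ⟨-r, (neg_neg r).symm⟩
  rcases le_total (2 * R) x with hR | hR
  · exact ⟨R, by linarith, hR, root.le⟩
  · refine ⟨x - R, by linarith, by linarith, ?_⟩
    have root_eq : a 0 - a 4 * (R * (x - R) * ((y - R) * (z - R))) = 0 :=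
      (eval_neg R).symm.trans root
    have larger : R * (x - R) * ((y - R) * (z - R)) ≤
        R * (x - R) * ((y - (x - R)) * (z - (x - R))) := by
      refine mul_le_mul_of_nonneg_left ?_ (mul_nonneg ?_ ?_)
      · refine mul_le_mul ?_ ?_ ?_ ?_ <;> linarith
      all_goals linarith
    rw [eval_neg]
    linarith [mul_le_mul_of_nonneg_left larger a4_pos.le]

theorem exists_isNodePair {a : ℕ → ℝ} (ha : ∀ k ≤ 4, 0 < a k) (hs : (genPoly 5 a).Splits)
    (hs' : (genPoly 4 fun k => a (k + 1)).Splits) : ∃ x y, IsNodePair a x y := by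
  have a4_pos := ha 4 le_rfl
  obtain ⟨x, y, z, hx, hxy, hyz, htail⟩ := exists_eval_neg_genPoly_four_eq
    (fun k hk => (ha (k + 1) (by omega))) hs'
  obtain ⟨vieta₁, vieta₂⟩ := genPoly_four_vieta htail
  obtain ⟨t, ht, two_mul_le, eval_nonpos⟩ := exists_le_half_eval_neg_nonpos ha hs hx hxy hyz htail
  refine ⟨t, x, ht, by linarith, eval_nonpos, ?_, by rw [htail]; ring, ?_⟩
  · have : 2 * t * (x + y + z) ≤ x * y + x * z + y * z := calc
      2 * t * (x + y + z) ≤ x * (x + y + z) := by gcongr; linarith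
      _ ≤ x * y + x * z + y * z := by nlinarith
    rw [vieta₁, vieta₂]
    nlinarith
  · rw [vieta₂]
    nlinarith

theorem discrim_nonneg_of_splits {c : ℕ → ℝ} (h2 : c 2 ≠ 0) (hs : (genPoly 3 c).Splits) :
    4 * c 0 * c 2 ≤ c 1 ^ 2 := by
  obtain ⟨x, hx⟩ := hs.exists_eval_eq_zero
    (degree_ne_of_natDegree_ne (n := 0) (by rw [natDegree_genPoly_succ h2]; omega))
  simp only [eval_genPoly, Finset.sum_range_succ, Finset.sum_range_zero] at hx
  have := discrim_eq_sq_of_quadratic_eq_zero (a := c 2) (b := c 1) (c := c 0) (x := x) (by linarith)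
  rw [discrim] at this
  nlinarith [sq_nonneg (2 * c 2 * x + c 1)]

theorem splits_genPoly_three {c : ℕ → ℝ} (h2 : 0 ≤ c 2) (hc : 4 * c 0 * c 2 ≤ c 1 ^ 2) :
    (genPoly 3 c).Splits := by
  rcases h2.eq_or_lt with h2 | h2
  · refine Splits.of_natDegree_le_one (natDegree_genPoly_le fun k hk hk' => ?_)
    rw [show k = 2 by omega, h2]
  · have hlead : (genPoly 3 c).leadingCoeff = c 2 := leadingCoeff_genPoly_succ h2.ne'
    refine splits_of_alternating (n := 1) (y := ![-c 1 / (2 * c 2)])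
      (natDegree_genPoly_succ h2.ne').le (hlead ▸ h2.le) (Subsingleton.strictAnti _) fun i => ?_
    have eval_eq : (genPoly 3 c).eval (-c 1 / (2 * c 2)) =
        -((c 1 ^ 2 - 4 * c 0 * c 2) / (4 * c 2)) := by
      simp only [eval_genPoly, Finset.sum_range_succ, Finset.sum_range_zero]
      field_simp
      ring
    have := div_nonneg (sub_nonneg.mpr hc) (by positivity : 0 ≤ 4 * c 2)
    simpa [eval_eq] using this

namespace IsNodePair

variable {a b : ℕ → ℝ} {x y : ℝ} {m : ℕ}

theorem eval_mul_nonpos_of_normalized (h : IsNodePair a x y) (ha : ∀ k ≤ 4, 0 < a k)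
    (hb : IsMultiplyPositive m b) (hm : 3 ≤ m) (h0 : b 0 = 1) (h1 : b 1 = 1) :
    (genPoly 5 fun k => a k * b k).eval (-x) ≤ 0 := by
  have b2_le : b 2 ≤ 1 := by simpa [h0, h1] using hb.mul_le_mul_of_lt (by omega) one_pos
  have b3_le : b 3 ≤ b 2 := by simpa [h0, h1] using hb.mul_le_mul_of_lt (by omega) two_pos
  have b4_le : b 4 ≤ b 3 := by simpa [h0, h1] using hb.mul_le_mul_of_lt (by omega) three_pos
  have b3_ge : 2 * b 2 - 1 ≤ b 3 := by
    have minor := hb.minor_012_123_nonneg hm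
    rw [h0, h1] at minor
    linarith
  have hx := h.pos
  have a3_pos := ha 3 (by omega)
  have a4_pos := ha 4 le_rfl
  have node := h.eval_nonpos
  simp only [eval_genPoly, Finset.sum_range_succ, Finset.sum_range_zero] at node ⊢
  have gap₂ : 0 ≤ (1 - b 2) * x ^ 2 * (a 2 - 2 * a 3 * x) :=
    mul_nonneg (mul_nonneg (sub_nonneg.mpr b2_le) (sq_nonneg x)) (sub_nonneg.mpr h.two_mul_le)
  have gap₃ : 0 ≤ (b 3 - (2 * b 2 - 1)) * (a 3 * x ^ 3) :=
    mul_nonneg (sub_nonneg.mpr b3_ge) (by positivity)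
  have gap₄ : 0 ≤ (1 - b 4) * (a 4 * x ^ 4) := mul_nonneg (by linarith) (by positivity)
  rw [h0, h1]
  linarith

theorem eval_mul_nonpos (h : IsNodePair a x y) (ha : ∀ k ≤ 4, 0 < a k)
    (hb : IsMultiplyPositive m b) (hm : 3 ≤ m) (h1 : b 1 ≠ 0) :
    (genPoly 5 fun k => a k * b k).eval (-(b 0 / b 1 * x)) ≤ 0 := by
  have nonneg := hb.nonneg (by omega)
  have b1_pos : 0 < b 1 := (nonneg 1).lt_of_ne h1.symm
  rcases (nonneg 0).eq_or_lt with h0 | b0_pos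
  · rw [← h0, zero_div, zero_mul, neg_zero, ← coeff_zero_eq_eval_zero, coeff_genPoly, ← h0]
    simp
  · have normalized := hb.mul_geometric (inv_pos.mpr b0_pos).le (div_pos b0_pos b1_pos)
    have := h.eval_mul_nonpos_of_normalized ha normalized hm (by field_simp) (by field_simp)
    rw [eval_genPoly_mul_geometric, mul_neg] at this
    exact nonpos_of_mul_nonpos_right this (inv_pos.mpr b0_pos)

theorem eval_mul_nonneg_of_normalized (h : IsNodePair a x y) (ha : ∀ k ≤ 4, 0 < a k)
    (hb : IsMultiplyPositive m b) (hm : 3 ≤ m) (h1 : b 1 = 1) (h2 : b 2 = 1) :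
    0 ≤ (genPoly 5 fun k => a k * b k).eval (-y) := by
  have b3_le : b 3 ≤ 1 := by simpa [h1, h2] using hb.mul_le_mul_of_lt (by omega) one_lt_two
  have b4_ge := hb.one_sub_le_three_mul_of_normalized hm h1 h2
  have hy : 0 < y := h.pos.trans h.lt
  have a4_pos := ha 4 le_rfl
  have node := congrArg (y * ·) h.eval_tail_eq_zero
  simp only [eval_genPoly, Finset.sum_range_succ, Finset.sum_range_zero] at node ⊢
  have gap₀ : 0 ≤ a 0 * b 0 := mul_nonneg (ha 0 (by omega)).le (hb.nonneg (by omega) 0)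
  have gap₃ : 0 ≤ (1 - b 3) * y ^ 3 * (a 3 - 3 * a 4 * y) :=
    mul_nonneg (mul_nonneg (sub_nonneg.mpr b3_le) (pow_nonneg hy.le 3))
      (sub_nonneg.mpr h.three_mul_le)
  have gap₄ : 0 ≤ (3 * (1 - b 3) - (1 - b 4)) * (a 4 * y ^ 4) :=
    mul_nonneg (sub_nonneg.mpr b4_ge) (by positivity)
  rw [h1, h2]
  linarith

theorem eval_mul_nonneg (h : IsNodePair a x y) (ha : ∀ k ≤ 4, 0 < a k)
    (hb : IsMultiplyPositive m b) (hm : 3 ≤ m) (h1 : b 1 ≠ 0) (h2 : b 2 ≠ 0) :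
    0 ≤ (genPoly 5 fun k => a k * b k).eval (-(b 1 / b 2 * y)) := by
  have nonneg := hb.nonneg (by omega)
  have b1_pos : 0 < b 1 := (nonneg 1).lt_of_ne h1.symm
  have b2_pos : 0 < b 2 := (nonneg 2).lt_of_ne h2.symm
  have scale_pos : 0 < b 2 / b 1 ^ 2 := by positivity
  have normalized := hb.mul_geometric scale_pos.le (div_pos b1_pos b2_pos)
  have := h.eval_mul_nonneg_of_normalized ha normalized hm (by field_simp) (by field_simp)
  rw [eval_genPoly_mul_geometric, mul_neg] at this
  exact nonneg_of_mul_nonneg_right this scale_pos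

theorem two_mul_mul_le (h : IsNodePair a x y) (ha : ∀ k ≤ 4, 0 < a k) :
    2 * a 0 * a 4 ≤ a 1 * a 3 := by
  have hx := h.pos
  have a4_pos := ha 4 le_rfl
  have a1_pos := ha 1 (by omega)
  have a0_le : a 0 ≤ a 1 * x := by
    have node := h.eval_nonpos
    simp only [eval_genPoly, Finset.sum_range_succ, Finset.sum_range_zero] at node
    nlinarith [mul_nonneg (sq_nonneg x) (sub_nonneg.mpr h.two_mul_le), pow_pos hx 4,
      mul_pos (ha 3 (by omega)) (pow_pos hx 3)]
  have a4_mul_le : 2 * a 4 * x ≤ a 3 := by nlinarith [h.lt, h.three_mul_le]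
  nlinarith

theorem two_mul_mul_le_mul (h : IsNodePair a x y) (ha : ∀ k ≤ 4, 0 < a k)
    (hb : IsMultiplyPositive m b) (hm : 2 ≤ m) :
    2 * (a 0 * b 0) * (a 4 * b 4) ≤ a 1 * b 1 * (a 3 * b 3) := by
  have nonneg := hb.nonneg (by omega)
  have minor : b 0 * b 4 ≤ b 1 * b 3 := hb.mul_le_mul_of_lt hm (by norm_num)
  calc 2 * (a 0 * b 0) * (a 4 * b 4) = (2 * a 0 * a 4) * (b 0 * b 4) := by ring
    _ ≤ (a 1 * a 3) * (b 1 * b 3) :=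
      mul_le_mul (h.two_mul_mul_le ha) minor (mul_nonneg (nonneg 0) (nonneg 4))
        (mul_pos (ha 1 (by omega)) (ha 3 (by omega))).le
    _ = a 1 * b 1 * (a 3 * b 3) := by ring

theorem div_mul_lt_div_mul (h : IsNodePair a x y) (hb : IsMultiplyPositive m b) (hm : 2 ≤ m)
    (h1 : b 1 ≠ 0) (h2 : b 2 ≠ 0) : b 0 / b 1 * x < b 1 / b 2 * y := by
  have nonneg := hb.nonneg (by omega)
  have b1_pos : 0 < b 1 := (nonneg 1).lt_of_ne h1.symm
  have b2_pos : 0 < b 2 := (nonneg 2).lt_of_ne h2.symm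
  have ratio_le : b 0 / b 1 ≤ b 1 / b 2 :=
    (div_le_div_iff₀ b1_pos b2_pos).mpr (hb.mul_le_mul_of_lt hm one_pos)
  exact mul_lt_mul' ratio_le h.lt h.pos.le (div_pos b1_pos b2_pos)

theorem div_mul_lt_vertex (h : IsNodePair a x y) (ha : ∀ k ≤ 4, 0 < a k)
    (hb : IsMultiplyPositive m b) (hm : 2 ≤ m) (h1 : b 1 ≠ 0) (h2 : b 2 ≠ 0) (h4 : b 4 ≠ 0) :
    b 1 / b 2 * y < a 3 * b 3 / (2 * (a 4 * b 4)) := by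
  have nonneg := hb.nonneg (by omega)
  have b1_pos : 0 < b 1 := (nonneg 1).lt_of_ne h1.symm
  have b2_pos : 0 < b 2 := (nonneg 2).lt_of_ne h2.symm
  have b4_pos : 0 < b 4 := (nonneg 4).lt_of_ne h4.symm
  have a4_pos := ha 4 le_rfl
  have hy : 0 < y := h.pos.trans h.lt
  have ratio_le : b 1 / b 2 ≤ b 3 / b 4 :=
    (div_le_div_iff₀ b2_pos b4_pos).mpr
      ((hb.mul_le_mul_of_lt hm (by norm_num : 1 < 3)).trans_eq (mul_comm _ _))
  have y_lt : y < a 3 / (2 * a 4) := by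
    rw [lt_div_iff₀ (by positivity)]
    linarith [h.three_mul_le, mul_pos a4_pos hy]
  calc b 1 / b 2 * y < b 3 / b 4 * (a 3 / (2 * a 4)) :=
      mul_lt_mul' ratio_le y_lt hy.le ((div_pos b1_pos b2_pos).trans_le ratio_le)
    _ = a 3 * b 3 / (2 * (a 4 * b 4)) := by field_simp

end IsNodePair

theorem eval_neg_vertex_nonpos {c : ℕ → ℝ} (h4 : 0 < c 4) (h014 : 2 * c 0 * c 4 ≤ c 1 * c 3)
    (h234 : 4 * c 2 * c 4 ≤ c 3 ^ 2) : (genPoly 5 c).eval (-(c 3 / (2 * c 4))) ≤ 0 := by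
  obtain ⟨t, ht⟩ : ∃ t, t = c 3 / (2 * c 4) := ⟨_, rfl⟩
  have c3_eq : c 3 = 2 * c 4 * t := by
    rw [ht]
    field_simp
  have c0_le : c 0 ≤ c 1 * t := by
    rw [c3_eq] at h014
    exact le_of_mul_le_mul_left (by linarith) h4
  have c2_le : c 2 ≤ c 4 * t ^ 2 := by
    rw [c3_eq] at h234
    nlinarith
  rw [← ht]
  simp only [eval_genPoly, Finset.sum_range_succ, Finset.sum_range_zero]
  rw [c3_eq]
  nlinarith [mul_le_mul_of_nonneg_right c2_le (sq_nonneg t)]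

section Product

variable {a b : ℕ → ℝ} {m : ℕ}

theorem four_mul_mul_le_sq (hdisc : 4 * a 2 * a 4 ≤ a 3 ^ 2) (hb : IsMultiplyPositive m b)
    (hm : 2 ≤ m) : 4 * (a 2 * b 2) * (a 4 * b 4) ≤ (a 3 * b 3) ^ 2 := by
  have nonneg := hb.nonneg (by omega)
  have minor : b 2 * b 4 ≤ b 3 * b 3 := hb.mul_le_mul_of_lt hm (by norm_num)
  calc 4 * (a 2 * b 2) * (a 4 * b 4) = (4 * a 2 * a 4) * (b 2 * b 4) := by ring
    _ ≤ a 3 ^ 2 * (b 3 * b 3) :=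
      mul_le_mul hdisc minor (mul_nonneg (nonneg 2) (nonneg 4)) (sq_nonneg _)
    _ = (a 3 * b 3) ^ 2 := by ring

theorem splits_genPoly_mul_of_eq_zero (ha : ∀ k ≤ 4, 0 < a k) (hdisc : 4 * a 2 * a 4 ≤ a 3 ^ 2)
    (hb : IsMultiplyPositive m b) (hm : 2 ≤ m) (h1 : b 1 = 0) :
    (genPoly 5 fun k => a k * b k).Splits := by
  by_cases h0 : b 0 = 0
  · have quadratic : (genPoly 3 fun k => a (k + 1 + 1) * b (k + 1 + 1)).Splits :=
      splits_genPoly_three (mul_nonneg (ha 4 le_rfl).le (hb.nonneg (by omega) 4))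
        (four_mul_mul_le_sq hdisc hb hm)
    rw [genPoly_succ, genPoly_succ]
    simp only [h0, h1, zero_add, mul_zero, C_0]
    exact Splits.X.mul (Splits.X.mul quadratic)
  · refine Splits.of_natDegree_le_one (natDegree_genPoly_le fun k hk _ => ?_)
    rw [hb.eq_zero_of_succ_eq_zero hm h0 h1 (by omega), mul_zero]

theorem splits_genPoly_mul {x y : ℝ} (ha : ∀ k ≤ 4, 0 < a k) (h : IsNodePair a x y)
    (hdisc : 4 * a 2 * a 4 ≤ a 3 ^ 2) (hb : IsMultiplyPositive m b) (hm : 3 ≤ m) :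
    (genPoly 5 fun k => a k * b k).Splits := by
  have hm2 : 2 ≤ m := by omega
  have nonneg := hb.nonneg (by omega)
  have lead_nonneg : 0 ≤ (genPoly 5 fun k => a k * b k).leadingCoeff :=
    coeff_genPoly_nonneg (fun k hk => mul_nonneg (ha k (by omega)).le (nonneg k)) _
  have degree_le {d : ℕ} (hd : b d ≠ 0) (hd' : b (d + 1) = 0) :
      (genPoly 5 fun k => a k * b k).natDegree ≤ d := natDegree_genPoly_le fun k hk _ => by
    rw [hb.eq_zero_of_succ_eq_zero hm2 hd hd' hk, mul_zero]
  by_cases h1 : b 1 = 0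
  · exact splits_genPoly_mul_of_eq_zero ha hdisc hb hm2 h1
  by_cases h2 : b 2 = 0
  · exact Splits.of_natDegree_le_one (degree_le h1 h2)
  have sign₁ := h.eval_mul_nonpos ha hb hm h1
  by_cases h3 : b 3 = 0
  · refine splits_of_alternating (degree_le h2 h3) lead_nonneg (y := ![-(b 0 / b 1 * x)]) ?_ ?_
    · simp
    · simpa [Fin.forall_fin_succ] using sign₁
  have sign₂ := h.eval_mul_nonneg ha hb hm h1 h2
  have lt₁₂ := h.div_mul_lt_div_mul hb hm2 h1 h2
  by_cases h4 : b 4 = 0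
  · refine splits_of_alternating (degree_le h3 h4) lead_nonneg
      (y := ![-(b 0 / b 1 * x), -(b 1 / b 2 * y)]) ?_ ?_
    · simpa using lt₁₂
    · simpa [Fin.forall_fin_succ] using ⟨sign₁, sign₂⟩
  have sign₃ := eval_neg_vertex_nonpos (c := fun k => a k * b k)
    (mul_pos (ha 4 le_rfl) ((nonneg 4).lt_of_ne (Ne.symm h4))) (h.two_mul_mul_le_mul ha hb hm2)
    (four_mul_mul_le_sq hdisc hb hm2)
  have lt₂₃ := h.div_mul_lt_vertex ha hb hm2 h1 h2 h4
  refine splits_of_alternating (natDegree_genPoly_le fun k _ _ => by omega) lead_nonneg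
    (y := ![-(b 0 / b 1 * x), -(b 1 / b 2 * y), -(a 3 * b 3 / (2 * (a 4 * b 4)))]) ?_ ?_
  · simpa using ⟨lt₁₂, lt₂₃⟩
  · simpa [Fin.forall_fin_succ, pow_succ] using ⟨sign₁, sign₂, sign₃⟩

end Product

/-- The polynomials `∑_{k=s}^4 a_k x^k` with `s = 0, 1, 2` have only real zeros. -/
def HasRealRootedTails (a : ℕ → ℝ) : Prop :=
  ∀ s ≤ 2, ∀ z : ℂ, ∑ k ∈ Finset.Ico s 5, (a k : ℂ) * z ^ k = 0 → ∃ x : ℝ, z = x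

theorem hasRealRootedTails_iff (a : ℕ → ℝ) : HasRealRootedTails a ↔
    (∀ z : ℂ, (a 0 : ℂ) + (a 1 : ℂ) * z + (a 2 : ℂ) * z ^ 2 + (a 3 : ℂ) * z ^ 3
      + (a 4 : ℂ) * z ^ 4 = 0 → ∃ x : ℝ, z = (x : ℂ)) ∧
    (∀ z : ℂ, (a 1 : ℂ) * z + (a 2 : ℂ) * z ^ 2 + (a 3 : ℂ) * z ^ 3
      + (a 4 : ℂ) * z ^ 4 = 0 → ∃ x : ℝ, z = (x : ℂ)) ∧
    (∀ z : ℂ, (a 2 : ℂ) * z ^ 2 + (a 3 : ℂ) * z ^ 3 + (a 4 : ℂ) * z ^ 4 = 0 →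
      ∃ x : ℝ, z = (x : ℂ)) := by
  simp [HasRealRootedTails, Nat.le_succ_iff, or_imp, forall_and, and_assoc, Finset.sum_Ico_succ_top,
    Finset.sum_range_succ]

namespace HasRealRootedTails

variable {a b : ℕ → ℝ} {m : ℕ}

theorem splits (h : HasRealRootedTails a) {s : ℕ} (hs : s ≤ 2) :
    (genPoly (5 - s) fun k => a (k + s)).Splits := by
  refine splits_of_forall_aeval_eq_zero fun z hz => h s hs z ?_
  have tail_eq : ∑ k ∈ Finset.Ico s 5, (a k : ℂ) * z ^ k =
      z ^ s * aeval z (genPoly (5 - s) fun k => a (k + s)) := by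
    rw [Finset.sum_Ico_eq_sum_range, aeval_genPoly, Finset.mul_sum]
    refine Finset.sum_congr rfl fun k _ => ?_
    rw [add_comm s k, pow_add, Complex.coe_algebraMap]
    ring
  rw [tail_eq, hz, mul_zero]

theorem isTotallyPositive_mul (h : HasRealRootedTails a) (hpos : ∀ k ≤ 4, 0 < a k)
    (h5 : ∀ k, 5 ≤ k → a k = 0) (hb : IsMultiplyPositive m b) (hm : 3 ≤ m) :
    IsTotallyPositive fun k => a k * b k := by
  obtain ⟨x, y, nodes⟩ :=
    exists_isNodePair hpos (h.splits (Nat.zero_le 2)) (h.splits one_le_two)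
  have hdisc : 4 * a 2 * a 4 ≤ a 3 ^ 2 :=
    discrim_nonneg_of_splits (hpos 4 le_rfl).ne' (h.splits le_rfl)
  rw [← coeff_genPoly_of_support (n := 5) fun k hk => mul_eq_zero_of_left (h5 k hk) _]
  exact isTotallyPositive_coeff_of_splits (splits_genPoly_mul hpos nodes hdisc hb hm)
    (coeff_genPoly_nonneg fun k hk =>
      mul_nonneg (hpos k (by omega)).le (hb.nonneg (by omega) k))

end HasRealRootedTails

theorem IsTPPreserver.hasRealRootedTails {a : ℕ → ℝ} (ha : IsTPPreserver a) (h4 : a 4 ≠ 0)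
    (h5 : ∀ k, 5 ≤ k → a k = 0) : HasRealRootedTails a := by
  intro s hs z hz
  obtain ⟨c, hc⟩ : ∃ c : ℕ → ℝ, ∀ k, c k = a k * if s ≤ k then 1 else 0 := ⟨_, fun _ => rfl⟩
  have coeff_eq : (genPoly 5 c).coeff = c :=
    coeff_genPoly_of_support fun k hk => by rw [hc, h5 k hk, zero_mul]
  have genPoly_ne_zero : genPoly 5 c ≠ 0 := by
    intro h
    have c4_eq_zero := congrFun coeff_eq 4
    rw [h, coeff_zero, hc, if_pos (by omega), mul_one] at c4_eq_zero
    exact h4 c4_eq_zero.symm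
  have totally_positive : IsTotallyPositive (genPoly 5 c).coeff := by
    rw [coeff_eq, funext hc]
    exact ha _ (isTotallyPositive_indicator_Ici s)
  refine totally_positive.mem_range_of_aeval_eq_zero genPoly_ne_zero ?_
  rw [← hz, aeval_genPoly, Finset.range_eq_Ico]
  symm
  refine Finset.sum_subset_zero_on_sdiff (Finset.Ico_subset_Ico_left s.zero_le) ?_ ?_
  · intro k hk
    have : ¬s ≤ k := by grind
    simp [hc, this]
  · intro k hk
    simp [hc, (Finset.mem_Ico.mp hk).1]

theorem stmt_3_general (a : ℕ → ℝ) (hpos : ∀ k ≤ 4, 0 < a k) (h5 : ∀ k, 5 ≤ k → a k = 0)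
    {m : ℕ} (hm : 3 ≤ m) :
    (IsTPPreserver a ↔
      ((∀ z : ℂ, (a 0 : ℂ) + (a 1 : ℂ) * z + (a 2 : ℂ) * z ^ 2 + (a 3 : ℂ) * z ^ 3
            + (a 4 : ℂ) * z ^ 4 = 0 → ∃ x : ℝ, z = (x : ℂ)) ∧
       (∀ z : ℂ, (a 1 : ℂ) * z + (a 2 : ℂ) * z ^ 2 + (a 3 : ℂ) * z ^ 3
            + (a 4 : ℂ) * z ^ 4 = 0 → ∃ x : ℝ, z = (x : ℂ)) ∧
       (∀ z : ℂ, (a 2 : ℂ) * z ^ 2 + (a 3 : ℂ) * z ^ 3 + (a 4 : ℂ) * z ^ 4 = 0 →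
            ∃ x : ℝ, z = (x : ℂ)))) ∧
    (IsTPPreserver a ↔
      ∀ b : ℕ → ℝ, IsMultiplyPositive m b → IsTotallyPositive fun k => a k * b k) := by
  rw [← hasRealRootedTails_iff]
  have real_rooted (ha : IsTPPreserver a) : HasRealRootedTails a :=
    ha.hasRealRootedTails (hpos 4 le_rfl).ne' h5
  have maps (h : HasRealRootedTails a) (b : ℕ → ℝ) (hb : IsMultiplyPositive m b) :
      IsTotallyPositive fun k => a k * b k := h.isTotallyPositive_mul hpos h5 hb hm
  have preserver (h : ∀ b, IsMultiplyPositive m b → IsTotallyPositive fun k => a k * b k) :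
      IsTPPreserver a := fun b hb => h b (hb.isMultiplyPositive m)
  exact ⟨⟨real_rooted, fun h => preserver (maps h)⟩, ⟨fun ha => maps (real_rooted ha), preserver⟩⟩

/-- five-term sequences. -/
theorem stmt_3 (a : ℕ → ℝ) (hpos : ∀ k ≤ 4, 0 < a k) (h5 : ∀ k, 5 ≤ k → a k = 0) :
    (IsTPPreserver a ↔
      ((∀ z : ℂ, (a 0 : ℂ) + (a 1 : ℂ) * z + (a 2 : ℂ) * z ^ 2 + (a 3 : ℂ) * z ^ 3
            + (a 4 : ℂ) * z ^ 4 = 0 → ∃ x : ℝ, z = (x : ℂ)) ∧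
       (∀ z : ℂ, (a 1 : ℂ) * z + (a 2 : ℂ) * z ^ 2 + (a 3 : ℂ) * z ^ 3
            + (a 4 : ℂ) * z ^ 4 = 0 → ∃ x : ℝ, z = (x : ℂ)) ∧
       (∀ z : ℂ, (a 2 : ℂ) * z ^ 2 + (a 3 : ℂ) * z ^ 3 + (a 4 : ℂ) * z ^ 4 = 0 →
            ∃ x : ℝ, z = (x : ℂ)))) ∧
    (IsTPPreserver a ↔
      ∀ b : ℕ → ℝ, IsMultiplyPositive 4 b → IsTotallyPositive fun k => a k * b k) :=
  stmt_3_general a hpos h5 (by norm_num)
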